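/- arXiv:1712.04730 — 3 statements merged into one kernel-verified Lean document; each statement's English description precedes it below -/
import Mathlib

section
/- Fix an integer n ≥ 1 and a real ψ with 0 < ψ < 1. Then, as ω → 0 from the right, the variance V_{n,ψ,ω} of the (L)MBD(ψ,ω) tends to n² ψ^n/(ψ^n+(1−ψ)^n) − n² ψ^{2n}/(ψ^n+(1−ψ)^n)². -/
open Filter Finset

/-- `K n a ψ ω = Σ_{i=0}^{n−a} C(n−a,i) ψ^i (1−ψ)^{n−a−i} ω^{(n−a−i)(i+a)}`. -/
noncomputable def K (n a : ℕ) (ψ ω : ℝ) : ℝ :=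
  ∑ i ∈ Finset.range (n - a + 1),
    (Nat.choose (n - a) i : ℝ) * ψ ^ i * (1 - ψ) ^ (n - a - i) * ω ^ ((n - a - i) * (i + a))

/-- `τ j = K n j / K n 0`. -/
noncomputable def τ (n j : ℕ) (ψ ω : ℝ) : ℝ := K n j ψ ω / K n 0 ψ ω

/-- pmf of the (L)MBD. -/
noncomputable def lmbd (n : ℕ) (ψ ω : ℝ) (y : ℕ) : ℝ :=
  (Nat.choose n y : ℝ) * ψ ^ y * (1 - ψ) ^ (n - y) * ω ^ ((n - y) * y) / K n 0 ψ ω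

/-- mean of the (L)MBD. -/
noncomputable def lmbdMean (n : ℕ) (ψ ω : ℝ) : ℝ :=
  ∑ y ∈ Finset.range (n + 1), (y : ℝ) * lmbd n ψ ω y

/-- variance of the (L)MBD. -/
noncomputable def lmbdVar (n : ℕ) (ψ ω : ℝ) : ℝ :=
  ∑ y ∈ Finset.range (n + 1), ((y : ℝ) - lmbdMean n ψ ω) ^ 2 * lmbd n ψ ω y

/-!
As `ω → 0` every weight `ω ^ ((n - y) * y)` with `0 < y < n` vanishes, while the two endpoint
weights stay equal to `1`. The distribution therefore degenerates to the two-point law on `{0, n}`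
with masses proportional to `(1 - ψ) ^ n` and `ψ ^ n`. Since the normalising constant does not
vanish at `ω = 0`, the variance is continuous there and its limit is the variance of that law.
-/

theorem pow_add_pow_ne_zero {R : Type*} [Ring R] [LinearOrder R] [IsStrictOrderedRing R]
    {x y : R} (hxy : x + y ≠ 0) (n : ℕ) : x ^ n + y ^ n ≠ 0 := by
  intro hsum
  rcases n.even_or_odd with hn | hn
  · obtain ⟨hx, hy⟩ := (add_eq_zero_iff_of_nonneg (hn.pow_nonneg x) (hn.pow_nonneg y)).mp hsum
    exact hxy (by rw [eq_zero_of_pow_eq_zero hx, eq_zero_of_pow_eq_zero hy, add_zero])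
  · have hpow : x ^ n = (-y) ^ n := by rw [hn.neg_pow, eq_neg_of_add_eq_zero_left hsum]
    exact hxy (add_eq_zero_iff_eq_neg.mpr (hn.pow_injective hpow))

theorem sum_range_mul_zero_pow_sub_mul {R : Type*} [Semiring R] {n : ℕ} (hn : n ≠ 0) (g : ℕ → R) :
    ∑ y ∈ range (n + 1), g y * 0 ^ ((n - y) * y) = g 0 + g n := by
  rw [sum_eq_add_of_mem 0 n (by simp) (by simp) hn.symm]
  · simp
  · rintro y hy ⟨hy0, hyn⟩
    have hexp : (n - y) * y ≠ 0 := Nat.mul_ne_zero (by grind) hy0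
    rw [zero_pow hexp, mul_zero]

theorem K_zero_right {n : ℕ} (hn : n ≠ 0) (ψ : ℝ) : K n 0 ψ 0 = ψ ^ n + (1 - ψ) ^ n := by
  simp only [K, Nat.sub_zero, Nat.add_zero, sum_range_mul_zero_pow_sub_mul hn]
  simp [add_comm]

theorem K_zero_right_ne_zero (n : ℕ) (ψ : ℝ) : K n 0 ψ 0 ≠ 0 := by
  obtain rfl | hn := eq_or_ne n 0
  · simp [K]
  · rw [K_zero_right hn]
    exact pow_add_pow_ne_zero (by simp) n

theorem sum_mul_lmbd_zero {n : ℕ} (hn : n ≠ 0) (ψ : ℝ) (f : ℕ → ℝ) :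
    ∑ y ∈ range (n + 1), f y * lmbd n ψ 0 y =
      (f 0 * (1 - ψ) ^ n + f n * ψ ^ n) / (ψ ^ n + (1 - ψ) ^ n) := by
  simp only [lmbd, K_zero_right hn, ← mul_div_assoc, ← sum_div, ← mul_assoc,
    sum_range_mul_zero_pow_sub_mul hn]
  simp

theorem lmbdMean_zero {n : ℕ} (hn : n ≠ 0) (ψ : ℝ) :
    lmbdMean n ψ 0 = n * ψ ^ n / (ψ ^ n + (1 - ψ) ^ n) := by
  simp [lmbdMean, sum_mul_lmbd_zero hn]

theorem lmbdVar_zero (n : ℕ) (ψ : ℝ) :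
    lmbdVar n ψ 0 = (n : ℝ) ^ 2 * ψ ^ n / (ψ ^ n + (1 - ψ) ^ n)
      - (n : ℝ) ^ 2 * ψ ^ (2 * n) / (ψ ^ n + (1 - ψ) ^ n) ^ 2 := by
  obtain rfl | hn := eq_or_ne n 0
  · simp [lmbdVar, lmbdMean]
  have hK : ψ ^ n + (1 - ψ) ^ n ≠ 0 := K_zero_right hn ψ ▸ K_zero_right_ne_zero n ψ
  rw [lmbdVar, sum_mul_lmbd_zero hn, lmbdMean_zero hn]
  field_simp
  push_cast
  ring

theorem continuous_K (n a : ℕ) (ψ : ℝ) : Continuous (K n a ψ) := by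
  unfold K
  fun_prop

theorem continuousAt_lmbd {n : ℕ} {ψ ω : ℝ} (hK : K n 0 ψ ω ≠ 0) (y : ℕ) :
    ContinuousAt (fun ω => lmbd n ψ ω y) ω :=
  ContinuousAt.div (by fun_prop) (continuous_K n 0 ψ).continuousAt hK

theorem continuousAt_lmbdVar {n : ℕ} {ψ ω : ℝ} (hK : K n 0 ψ ω ≠ 0) :
    ContinuousAt (lmbdVar n ψ) ω := by
  have hlmbd := continuousAt_lmbd hK
  unfold lmbdVar lmbdMean
  fun_prop

theorem stmt_5_general (n : ℕ) (ψ : ℝ) :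
    Tendsto (lmbdVar n ψ) (nhds 0)
      (nhds ((n : ℝ) ^ 2 * ψ ^ n / (ψ ^ n + (1 - ψ) ^ n)
        - (n : ℝ) ^ 2 * ψ ^ (2 * n) / (ψ ^ n + (1 - ψ) ^ n) ^ 2)) := by
  rw [← lmbdVar_zero]
  exact (continuousAt_lmbdVar (K_zero_right_ne_zero n ψ)).tendsto

theorem stmt_5 (n : ℕ) (hn : 1 ≤ n) (ψ : ℝ) (hψ0 : 0 < ψ) (hψ1 : ψ < 1) :
    Filter.Tendsto (fun ω : ℝ => lmbdVar n ψ ω) (nhdsWithin 0 (Set.Ioi 0))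
      (nhds ((n : ℝ) ^ 2 * ψ ^ n / (ψ ^ n + (1 - ψ) ^ n)
        - (n : ℝ) ^ 2 * ψ ^ (2 * n) / (ψ ^ n + (1 - ψ) ^ n) ^ 2)) :=
  (stmt_5_general n ψ).mono_left nhdsWithin_le_nhds
end

section
/- Let n ≥ 3 be an odd integer and let ψ be a real with 0 < ψ < 1. Then, as ω → +∞, τ_2(ψ,ω) tends to ((n−3)/4 + ψ)/(n ψ²). -/
/-!
Reindexing by `y = i + j`, the identity `C(n, j) C(n - j, y - j) = C(n, y) C(y, j)` turns
`C(n, j) ψ ^ j K_{n,j}` into `∑ y, C(y, j) w y`, where `w` are the unnormalised weights of `lmbd`,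
so `C(n, j) ψ ^ j τ_j` is the binomial moment `E[C(Y, j)]`. When `n = 2m + 1`, the exponent
`(n - y) y` of `ω` in `w y` is largest exactly at `y = m` and `y = m + 1`. As `ω → ∞` the
distribution therefore concentrates on these two points, with masses `1 - ψ` and `ψ`, and the
moment tends to `(1 - ψ) C(m, j) + ψ C(m + 1, j)`.
-/

open Filter Finset

theorem tendsto_sum_mul_pow_div_pow_atTop {𝕜 ι : Type*} [Field 𝕜] [LinearOrder 𝕜]
    [IsStrictOrderedRing 𝕜] [TopologicalSpace 𝕜] [OrderTopology 𝕜] (s : Finset ι) (c : ι → 𝕜)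
    {e : ι → ℕ} {N : ℕ} (he : ∀ i ∈ s, e i ≤ N) :
    Tendsto (fun x : 𝕜 => (∑ i ∈ s, c i * x ^ e i) / x ^ N) atTop
      (nhds (∑ i ∈ s with e i = N, c i)) := by
  simp only [sum_div, sum_filter, mul_div_assoc]
  refine tendsto_finsetSum _ fun i hi => ?_
  rcases (he i hi).lt_or_eq with hlt | heq
  · simpa [hlt.ne] using (tendsto_pow_div_pow_atTop_zero hlt).const_mul (c i)
  · refine tendsto_const_nhds.congr' ?_
    filter_upwards [eventually_ne_atTop (0 : 𝕜)] with x hx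
    simp [heq, hx]

section CentralExponent

variable {m y : ℕ}

theorem two_mul_add_one_sub_mul_self_eq (hy : y ≤ 2 * m + 1) :
    (((2 * m + 1 - y) * y : ℕ) : ℤ) = m * (m + 1) - (y - m) * (y - (m + 1)) := by
  push_cast [hy]
  ring

theorem two_mul_add_one_sub_mul_self_le (hy : y ≤ 2 * m + 1) :
    (2 * m + 1 - y) * y ≤ m * (m + 1) := by
  have hnonneg : (0 : ℤ) ≤ (y - m) * (y - (m + 1)) := by
    rcases le_or_gt y m with h | h
    · exact mul_nonneg_of_nonpos_of_nonpos (by lia) (by lia)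
    · exact mul_nonneg (by lia) (by lia)
  rw [← Nat.cast_le (α := ℤ), two_mul_add_one_sub_mul_self_eq hy]
  push_cast
  exact sub_le_self _ hnonneg

theorem two_mul_add_one_sub_mul_self_eq_iff (hy : y ≤ 2 * m + 1) :
    (2 * m + 1 - y) * y = m * (m + 1) ↔ y = m ∨ y = m + 1 := by
  rw [← Nat.cast_inj (R := ℤ), two_mul_add_one_sub_mul_self_eq hy]
  push_cast
  rw [sub_eq_self, mul_eq_zero, sub_eq_zero, sub_eq_zero]
  norm_cast

theorem filter_two_mul_add_one_sub_mul_self_eq (m : ℕ) :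
    {y ∈ range (2 * m + 1 + 1) | (2 * m + 1 - y) * y = m * (m + 1)} = {m, m + 1} := by
  ext y
  simp only [mem_filter, mem_range, mem_insert, mem_singleton]
  constructor
  · rintro ⟨hy, h⟩
    exact (two_mul_add_one_sub_mul_self_eq_iff (by lia)).1 h
  · intro h
    exact ⟨by lia, (two_mul_add_one_sub_mul_self_eq_iff (by lia)).2 h⟩

end CentralExponent

theorem choose_mul_pow_mul_K {n j : ℕ} (hj : j ≤ n) (ψ ω : ℝ) :
    n.choose j * ψ ^ j * K n j ψ ω =
      ∑ y ∈ range (n + 1),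
        (y.choose j * (n.choose y * ψ ^ y * (1 - ψ) ^ (n - y))) * ω ^ ((n - y) * y) := by
  obtain ⟨d, rfl⟩ := Nat.exists_eq_add_of_le hj
  have hlow : ∑ y ∈ range j, ((y.choose j : ℝ) *
      ((j + d).choose y * ψ ^ y * (1 - ψ) ^ (j + d - y))) * ω ^ ((j + d - y) * y) = 0 :=
    sum_eq_zero fun y hy => by simp [Nat.choose_eq_zero_of_lt (mem_range.1 hy)]
  rw [add_assoc, sum_range_add, hlow, zero_add, K, mul_sum, Nat.add_sub_cancel_left]
  refine sum_congr rfl fun i _ => ?_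
  have hchoose : ((j + d).choose (j + i) : ℝ) * (j + i).choose j =
      (j + d).choose j * d.choose i := by
    have h := Nat.choose_mul (n := j + d) (Nat.le_add_right j i)
    rw [Nat.add_sub_cancel_left, Nat.add_sub_cancel_left] at h
    exact_mod_cast h
  rw [Nat.add_sub_add_left, add_comm i j, pow_add ψ]
  linear_combination (-ψ ^ j * ψ ^ i * (1 - ψ) ^ (d - i) * ω ^ ((d - i) * (j + i))) * hchoose

theorem tendsto_choose_mul_pow_mul_K_div_pow {m j : ℕ} (hj : j ≤ 2 * m + 1) (ψ : ℝ) :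
    Tendsto
      (fun ω : ℝ => (2 * m + 1).choose j * ψ ^ j * K (2 * m + 1) j ψ ω / ω ^ (m * (m + 1))) atTop
      (nhds ((2 * m + 1).choose m * (ψ ^ m * (1 - ψ) ^ m) *
        ((1 - ψ) * m.choose j + ψ * (m + 1).choose j))) := by
  simp only [choose_mul_pow_mul_K hj]
  convert tendsto_sum_mul_pow_div_pow_atTop (range (2 * m + 1 + 1))
    (fun y => (y.choose j * ((2 * m + 1).choose y * ψ ^ y * (1 - ψ) ^ (2 * m + 1 - y)) : ℝ))
    (fun y hy => two_mul_add_one_sub_mul_self_le (Nat.lt_succ_iff.1 (mem_range.1 hy))) using 2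
  rw [filter_two_mul_add_one_sub_mul_self_eq, sum_pair (Nat.lt_add_one m).ne, Nat.choose_symm_half,
    show 2 * m + 1 - m = m + 1 by lia, show 2 * m + 1 - (m + 1) = m by lia]
  ring

theorem tendsto_τ_two_mul_add_one {m j : ℕ} (hj : j ≤ 2 * m + 1) {ψ : ℝ} (hψ0 : ψ ≠ 0)
    (hψ1 : ψ ≠ 1) :
    Tendsto (fun ω : ℝ => τ (2 * m + 1) j ψ ω) atTop
      (nhds (((1 - ψ) * m.choose j + ψ * (m + 1).choose j) /
        ((2 * m + 1).choose j * ψ ^ j))) := by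
  have hcentral : ((2 * m + 1).choose m : ℝ) * (ψ ^ m * (1 - ψ) ^ m) ≠ 0 :=
    mul_ne_zero (Nat.cast_ne_zero.2 (Nat.choose_pos (by lia)).ne')
      (mul_ne_zero (pow_ne_zero _ hψ0) (pow_ne_zero _ (sub_ne_zero.2 hψ1.symm)))
  have hscale : ((2 * m + 1).choose j : ℝ) * ψ ^ j ≠ 0 :=
    mul_ne_zero (Nat.cast_ne_zero.2 (Nat.choose_pos hj).ne') (pow_ne_zero _ hψ0)
  have hden : Tendsto (fun ω : ℝ => K (2 * m + 1) 0 ψ ω / ω ^ (m * (m + 1))) atTop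
      (nhds ((2 * m + 1).choose m * (ψ ^ m * (1 - ψ) ^ m))) := by
    simpa using tendsto_choose_mul_pow_mul_K_div_pow (Nat.zero_le (2 * m + 1)) ψ
  have hratio := ((tendsto_choose_mul_pow_mul_K_div_pow hj ψ).div hden hcentral).div_const
    ((2 * m + 1).choose j * ψ ^ j)
  rw [mul_div_cancel_left₀ _ hcentral] at hratio
  refine hratio.congr' ?_
  filter_upwards [eventually_ne_atTop (0 : ℝ)] with ω hω
  rw [Pi.div_apply, div_div_div_cancel_right₀ (pow_ne_zero _ hω), mul_div_assoc,
    mul_div_cancel_left₀ _ hscale, τ]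

theorem stmt_12_general {n : ℕ} (hn : 3 ≤ n) (hno : Odd n) {ψ : ℝ} (hψ0 : ψ ≠ 0) (hψ1 : ψ ≠ 1) :
    Tendsto (fun ω : ℝ => τ n 2 ψ ω) atTop
      (nhds ((((n : ℝ) - 3) / 4 + ψ) / ((n : ℝ) * ψ ^ 2))) := by
  obtain ⟨m, rfl⟩ := hno
  have hm : (m : ℝ) ≠ 0 := Nat.cast_ne_zero.2 (by lia)
  convert tendsto_τ_two_mul_add_one (m := m) (j := 2) (by lia) hψ0 hψ1 using 2
  simp only [Nat.cast_choose_two]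
  push_cast
  field_simp
  ring

theorem stmt_12 (n : ℕ) (hn : 3 ≤ n) (hno : Odd n)
    (ψ : ℝ) (hψ0 : 0 < ψ) (hψ1 : ψ < 1) :
    Filter.Tendsto (fun ω : ℝ => τ n 2 ψ ω) Filter.atTop
      (nhds ((((n : ℝ) - 3) / 4 + ψ) / ((n : ℝ) * ψ ^ 2))) := stmt_12_general hn hno hψ0.ne' hψ1.ne
end

section
/- Let n ≥ 1 be an odd integer and let ψ be a real with 0 < ψ < 1. Then, as ω → +∞: p_{n,ψ,ω}((n−1)/2) tends to 1−ψ, p_{n,ψ,ω}((n+1)/2) tends to ψ, and for every integer y with 0 ≤ y ≤ n and y ∉ {(n−1)/2, (n+1)/2}, p_{n,ψ,ω}(y) tends to 0. -/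
open Filter Finset

/-!
Write `n = 2 * m + 1` and `x = n - y`. Then `m * (m + 1) - x * y = (y - m) * (y - (m + 1))` is a
product of two consecutive integers, so the exponent `x * y` of `ω` in the weight of `y` is largest
exactly at `y = m` and `y = m + 1`. Only these two terms survive division by the
dominant power of `ω`, and their coefficients are in the ratio `(1 - ψ) : ψ`.
-/

section DominantPower

variable {𝕜 : Type*} [Field 𝕜] [LinearOrder 𝕜] [IsStrictOrderedRing 𝕜] [TopologicalSpace 𝕜]
  [OrderTopology 𝕜]

lemma tendsto_const_mul_pow_div_pow_atTop (c : 𝕜) {k d : ℕ} (hkd : k ≤ d) :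
    Tendsto (fun x : 𝕜 => c * x ^ k / x ^ d) atTop (nhds (if k = d then c else 0)) := by
  split_ifs with h
  · subst h
    refine tendsto_const_nhds.congr' ?_
    filter_upwards [eventually_ne_atTop 0] with x hx
    exact (mul_div_cancel_right₀ c (pow_ne_zero k hx)).symm
  · simpa only [mul_div_assoc, mul_zero] using
      (tendsto_pow_div_pow_atTop_zero (lt_of_le_of_ne hkd h)).const_mul c

lemma tendsto_mul_pow_div_sum_mul_pow_atTop {ι : Type*} {s : Finset ι} {c : ι → 𝕜} {e : ι → ℕ}
    {d : ℕ} (he : ∀ i ∈ s, e i ≤ d) (hc : ∑ i ∈ s with e i = d, c i ≠ 0) {j : ι} (hj : j ∈ s) :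
    Tendsto (fun x : 𝕜 => c j * x ^ e j / ∑ i ∈ s, c i * x ^ e i) atTop
      (nhds ((if e j = d then c j else 0) / ∑ i ∈ s with e i = d, c i)) := by
  have hterm : ∀ i ∈ s, Tendsto (fun x : 𝕜 => c i * x ^ e i / x ^ d) atTop
      (nhds (if e i = d then c i else 0)) :=
    fun i hi => tendsto_const_mul_pow_div_pow_atTop (c i) (he i hi)
  have hsum := tendsto_finsetSum s hterm
  rw [← sum_filter] at hsum
  refine ((hterm j hj).div hsum hc).congr' ?_
  filter_upwards [eventually_ne_atTop 0] with x hx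
  rw [Pi.div_apply, ← sum_div, div_div_div_cancel_right₀ (pow_ne_zero d hx)]

end DominantPower

section Exponent

variable {m x y : ℕ}

lemma mul_succ_sub_mul_eq_of_add_eq (h : x + y = 2 * m + 1) :
    (m * (m + 1) - x * y : ℤ) = (y - m) * (y - (m + 1)) := by
  rw [show (x : ℤ) = 2 * m + 1 - y by omega]
  ring

lemma mul_le_mul_succ_of_add_eq (h : x + y = 2 * m + 1) : x * y ≤ m * (m + 1) := by
  have hprod : (0 : ℤ) ≤ (y - m) * (y - (m + 1)) := by
    rcases le_or_gt y m with hy | hy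
    · exact mul_nonneg_of_nonpos_of_nonpos (by omega) (by omega)
    · exact mul_nonneg (by omega) (by omega)
  rw [← mul_succ_sub_mul_eq_of_add_eq h, sub_nonneg] at hprod
  exact_mod_cast hprod

lemma mul_eq_mul_succ_iff_of_add_eq (h : x + y = 2 * m + 1) :
    x * y = m * (m + 1) ↔ y = m ∨ y = m + 1 := by
  have hprod : (m * (m + 1) - x * y : ℤ) = 0 ↔ (y - m : ℤ) = 0 ∨ (y - (m + 1) : ℤ) = 0 := by
    rw [mul_succ_sub_mul_eq_of_add_eq h, mul_eq_zero]
  simp only [sub_eq_zero] at hprod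
  rw [eq_comm]
  exact_mod_cast hprod

end Exponent

/-- The binomial weight of `y`, that is, the coefficient of the power of `ω` in the numerator of
`lmbd n ψ ω y`. It is allowed to be negative, `ψ` being an arbitrary real number. -/
noncomputable def binomialWeight (n : ℕ) (ψ : ℝ) (y : ℕ) : ℝ :=
  (n.choose y : ℝ) * ψ ^ y * (1 - ψ) ^ (n - y)

lemma lmbd_eq_binomialWeight_mul_pow_div_sum (n : ℕ) (ψ ω : ℝ) (y : ℕ) :
    lmbd n ψ ω y = binomialWeight n ψ y * ω ^ ((n - y) * y) /
      ∑ i ∈ range (n + 1), binomialWeight n ψ i * ω ^ ((n - i) * i) := by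
  simp only [lmbd, K, binomialWeight, Nat.sub_zero, add_zero]

section Odd

variable (m : ℕ) (ψ : ℝ)

lemma binomialWeight_odd_middle :
    binomialWeight (2 * m + 1) ψ m =
      (1 - ψ) * ((2 * m + 1).choose m * ψ ^ m * (1 - ψ) ^ m) := by
  rw [binomialWeight, show 2 * m + 1 - m = m + 1 by omega]
  ring

lemma binomialWeight_odd_middle_succ :
    binomialWeight (2 * m + 1) ψ (m + 1) =
      ψ * ((2 * m + 1).choose m * ψ ^ m * (1 - ψ) ^ m) := by
  rw [binomialWeight, show 2 * m + 1 - (m + 1) = m by omega, Nat.choose_symm_half]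
  ring

lemma filter_range_sub_mul_eq_mul_succ :
    {i ∈ range (2 * m + 1 + 1) | (2 * m + 1 - i) * i = m * (m + 1)} = {m, m + 1} := by
  ext i
  rw [mem_filter, mem_range, Nat.lt_succ_iff, mem_insert, mem_singleton]
  constructor
  · rintro ⟨hi, h⟩
    exact (mul_eq_mul_succ_iff_of_add_eq (Nat.sub_add_cancel hi)).1 h
  · intro h
    have hi : i ≤ 2 * m + 1 := by omega
    exact ⟨hi, (mul_eq_mul_succ_iff_of_add_eq (Nat.sub_add_cancel hi)).2 h⟩

lemma sum_binomialWeight_maximal_exponent :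
    ∑ i ∈ range (2 * m + 1 + 1) with (2 * m + 1 - i) * i = m * (m + 1),
      binomialWeight (2 * m + 1) ψ i = (2 * m + 1).choose m * ψ ^ m * (1 - ψ) ^ m := by
  rw [filter_range_sub_mul_eq_mul_succ, sum_pair m.succ_ne_self.symm,
    binomialWeight_odd_middle, binomialWeight_odd_middle_succ]
  ring

variable {ψ}

lemma tendsto_lmbd_odd_atTop (hψ0 : ψ ≠ 0) (hψ1 : ψ ≠ 1) {y : ℕ} (hy : y ≤ 2 * m + 1) :
    Tendsto (fun ω => lmbd (2 * m + 1) ψ ω y) atTop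
      (nhds (if y = m then 1 - ψ else if y = m + 1 then ψ else 0)) := by
  have hC : ((2 * m + 1).choose m * ψ ^ m * (1 - ψ) ^ m : ℝ) ≠ 0 :=
    mul_ne_zero (mul_ne_zero (Nat.cast_ne_zero.2 (Nat.choose_pos (by omega)).ne')
      (pow_ne_zero m hψ0)) (pow_ne_zero m (sub_ne_zero.2 hψ1.symm))
  have hlim := tendsto_mul_pow_div_sum_mul_pow_atTop
    (fun i hi => mul_le_mul_succ_of_add_eq (Nat.sub_add_cancel (mem_range_succ_iff.1 hi)))
    ((sum_binomialWeight_maximal_exponent m ψ).trans_ne hC) (mem_range_succ_iff.2 hy)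
  simp only [← lmbd_eq_binomialWeight_mul_pow_div_sum, sum_binomialWeight_maximal_exponent,
    mul_eq_mul_succ_iff_of_add_eq (Nat.sub_add_cancel hy)] at hlim
  convert hlim using 2
  rcases eq_or_ne y m with rfl | hym
  · rw [if_pos rfl, if_pos (Or.inl rfl), binomialWeight_odd_middle, mul_div_cancel_right₀ _ hC]
  rcases eq_or_ne y (m + 1) with rfl | hym'
  · rw [if_neg hym, if_pos rfl, if_pos (Or.inr rfl), binomialWeight_odd_middle_succ,
      mul_div_cancel_right₀ _ hC]
  · rw [if_neg hym, if_neg hym', if_neg (not_or.2 ⟨hym, hym'⟩), zero_div]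

end Odd

theorem stmt_14_general (n : ℕ) (hno : Odd n) (ψ : ℝ) (hψ0 : ψ ≠ 0) (hψ1 : ψ ≠ 1) :
    Tendsto (fun ω : ℝ => lmbd n ψ ω ((n - 1) / 2)) atTop (nhds (1 - ψ)) ∧
    Tendsto (fun ω : ℝ => lmbd n ψ ω ((n + 1) / 2)) atTop (nhds ψ) ∧
    ∀ y : ℕ, y ≤ n → y ≠ (n - 1) / 2 → y ≠ (n + 1) / 2 →
      Tendsto (fun ω : ℝ => lmbd n ψ ω y) atTop (nhds 0) := by
  obtain ⟨m, rfl⟩ := hno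
  rw [show (2 * m + 1 - 1) / 2 = m by omega, show (2 * m + 1 + 1) / 2 = m + 1 by omega]
  refine ⟨?_, ?_, fun y hy hym hym' => ?_⟩
  · simpa only [if_pos] using tendsto_lmbd_odd_atTop m hψ0 hψ1 (y := m) (by omega)
  · simpa only [if_neg m.succ_ne_self, if_pos] using
      tendsto_lmbd_odd_atTop m hψ0 hψ1 (y := m + 1) (by omega)
  · simpa only [if_neg hym, if_neg hym'] using tendsto_lmbd_odd_atTop m hψ0 hψ1 hy

theorem stmt_14 (n : ℕ) (hn : 1 ≤ n) (hno : Odd n)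
    (ψ : ℝ) (hψ0 : 0 < ψ) (hψ1 : ψ < 1) :
    Filter.Tendsto (fun ω : ℝ => lmbd n ψ ω ((n - 1) / 2)) Filter.atTop (nhds (1 - ψ)) ∧
    Filter.Tendsto (fun ω : ℝ => lmbd n ψ ω ((n + 1) / 2)) Filter.atTop (nhds ψ) ∧
    ∀ y : ℕ, y ≤ n → y ≠ (n - 1) / 2 → y ≠ (n + 1) / 2 →
      Filter.Tendsto (fun ω : ℝ => lmbd n ψ ω y) Filter.atTop (nhds 0) := by
  exact stmt_14_general n hno ψ hψ0.ne' hψ1.ne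
end
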